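/- Minimum upload cost of capacity achieving RIR_max (Corollary 4): for all integers N ≥ 2 and K ≥ 1, every RIR_max scheme with K messages, N databases, and rate R = L_w/(N·L_x) = C_K(N) must have M_n ≥ N^{K−1} for every database n ∈ {1,…,N} (i.e., upload cost at least (K−1)·log N bits per database), and there exists a capacity achieving RIR_max scheme with M_n = N^{K−1} for every n. -/

import Mathlib

open scoped BigOperators

noncomputable section

/-- A finite probability space: a finite type together with a probability mass function. -/
structure FinProbSpace where
  Ω : Type
  [fin : Fintype Ω]
  p : Ω → ℝ
  nonneg : ∀ ω, 0 ≤ p ω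
  sum_one : ∑ ω, p ω = 1

attribute [instance] FinProbSpace.fin

namespace FinProbSpace

variable (P : FinProbSpace)

/-- Probability that the random variable `X` takes the value `a`. -/
def prob {α : Type} [DecidableEq α] (X : P.Ω → α) (a : α) : ℝ :=
  ∑ ω, if X ω = a then P.p ω else 0

/-- Shannon entropy (in bits) of a finitely valued random variable. -/
def H {α : Type} [Fintype α] [DecidableEq α] (X : P.Ω → α) : ℝ :=
  ∑ a, -(P.prob X a * Real.logb 2 (P.prob X a))

/-- Conditional Shannon entropy `H(X | Y) = H(X, Y) - H(Y)` (in bits). -/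
def condH {α β : Type} [Fintype α] [DecidableEq α] [Fintype β] [DecidableEq β]
    (X : P.Ω → α) (Y : P.Ω → β) : ℝ :=
  P.H (fun ω => (X ω, Y ω)) - P.H Y

/-- The tuple random variable `(X_i)_{i ∈ ι}`. -/
def tuple {ι V : Type} (X : ι → P.Ω → V) : P.Ω → ι → V := fun ω i => X i ω

/-- Joint (mutual) independence of a finite family of random variables. -/
def iIndep {ι V : Type} [Fintype ι] [DecidableEq ι] [DecidableEq V] (X : ι → P.Ω → V) : Prop :=
  ∀ a : ι → V, P.prob (P.tuple X) a = ∏ i, P.prob (X i) (a i)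

/-- `X` and `Y` contain the same information about everything beyond `Z`:
`H(X | Y, Z) = H(Y | X, Z) = 0`. -/
def sameInfo {α β γ : Type} [Fintype α] [DecidableEq α] [Fintype β] [DecidableEq β]
    [Fintype γ] [DecidableEq γ] (X : P.Ω → α) (Y : P.Ω → β) (Z : P.Ω → γ) : Prop :=
  P.condH X (fun ω => (Y ω, Z ω)) = 0 ∧ P.condH Y (fun ω => (X ω, Z ω)) = 0

end FinProbSpace

/-- A locally decodable code with `K` source symbols of entropy `Lw`, `M` coded symbols of
entropy `Lx`, and locality `N`. -/
structure LDC (K N M : ℕ) (Lw Lx : ℝ) where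
  P : FinProbSpace
  V : Type
  [fV : Fintype V]
  [dV : DecidableEq V]
  V' : Type
  [fV' : Fintype V']
  [dV' : DecidableEq V']
  /-- the source symbols -/
  W : Fin K → P.Ω → V
  /-- the coded symbols -/
  X : Fin M → P.Ω → V'
  indep : P.iIndep W
  HW : ∀ k, P.H (W k) = Lw
  coded_fn : ∀ m, ∃ f : (Fin K → V) → V', ∀ ω, X m ω = f (fun k => W k ω)
  HX : ∀ m, P.H (X m) = Lx
  /-- the decoding supersets -/
  decSets : Fin K → Finset (Finset (Fin M))
  decSets_nonempty : ∀ k, (decSets k).Nonempty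
  decSets_card : ∀ k, ∀ s ∈ decSets k, s.card = N
  decodes : ∀ k, ∀ s ∈ decSets k,
    P.condH (W k) (P.tuple fun i : {x // x ∈ s} => X i.1) = 0

attribute [instance] LDC.fV LDC.dV LDC.fV' LDC.dV'

/-- A universal LDC: every coded symbol appears in some decoding set of every source symbol. -/
def LDC.IsUniversal {K N M : ℕ} {Lw Lx : ℝ} (C : LDC K N M Lw Lx) : Prop :=
  ∀ (m : Fin M) (k : Fin K), ∃ s ∈ C.decSets k, m ∈ s

/-- A perfectly smooth LDC: for each source symbol, every coded symbol lies in the same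
number of decoding sets. -/
def LDC.IsSmooth {K N M : ℕ} {Lw Lx : ℝ} (C : LDC K N M Lw Lx) : Prop :=
  ∀ (k : Fin K) (m m' : Fin M),
    ((C.decSets k).filter (fun s => m ∈ s)).card =
      ((C.decSets k).filter (fun s => m' ∈ s)).card

/-- `C*(N, K) = N (1 + 1/N + ⋯ + 1/N^{K-1})⁻¹`. -/
def Cstar (N K : ℕ) : ℝ := N / (∑ j ∈ Finset.range K, (1 / (N : ℝ)) ^ j)

/-- An `N`-query information retrieval scheme with `K` messages of entropy `Lw` and
answer sets of sizes `Mn n` with answers of entropy `Lx`. -/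
structure IRScheme (K N : ℕ) (Mn : Fin N → ℕ) (Lw Lx : ℝ) where
  P : FinProbSpace
  V : Type
  [fV : Fintype V]
  [dV : DecidableEq V]
  V' : Type
  [fV' : Fintype V']
  [dV' : DecidableEq V']
  /-- the messages -/
  W : Fin K → P.Ω → V
  /-- `A n m` is the `m`-th possible answer of database `n` -/
  A : (n : Fin N) → Fin (Mn n) → P.Ω → V'
  indep : P.iIndep W
  HW : ∀ k, P.H (W k) = Lw
  ans_fn : ∀ n m, ∃ f : (Fin K → V) → V', ∀ ω, A n m ω = f (fun k => W k ω)
  HA : ∀ n m, P.H (A n m) = Lx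
  /-- the decoding supersets: each decoding set consists of one answer index per database -/
  Q : Fin K → Finset ((n : Fin N) → Fin (Mn n))
  Q_nonempty : ∀ k, (Q k).Nonempty
  decodes : ∀ k, ∀ q ∈ Q k, P.condH (W k) (P.tuple fun n => A n (q n)) = 0

attribute [instance] IRScheme.fV IRScheme.dV IRScheme.fV' IRScheme.dV'

/-- A repudiative (RIR_max) scheme: every possible answer of every database appears in some
decoding set of every message. -/
def IRScheme.IsRIR {K N : ℕ} {Mn : Fin N → ℕ} {Lw Lx : ℝ} (C : IRScheme K N Mn Lw Lx) : Prop :=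
  ∀ (n : Fin N) (m : Fin (Mn n)) (k : Fin K), ∃ q ∈ C.Q k, q n = m

/-- A perfectly private (PIR_max) scheme: for each message there is a distribution on its
decoding sets such that the marginal distribution of the query to each database does not
depend on the message. -/
def IRScheme.IsPIR {K N : ℕ} {Mn : Fin N → ℕ} {Lw Lx : ℝ} (C : IRScheme K N Mn Lw Lx) : Prop :=
  ∃ μ : Fin K → ((n : Fin N) → Fin (Mn n)) → ℝ,
    (∀ k q, 0 ≤ μ k q) ∧ (∀ k, ∑ q ∈ C.Q k, μ k q = 1) ∧
    (∀ (k k' : Fin K) (n : Fin N) (m : Fin (Mn n)),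
      ∑ q ∈ (C.Q k).filter (fun q => q n = m), μ k q =
        ∑ q ∈ (C.Q k').filter (fun q => q n = m), μ k' q)

/-- `C_K(N) = (1 + 1/N + ⋯ + 1/N^{K-1})⁻¹`, the capacity of PIR. -/
def CK (N K : ℕ) : ℝ := (∑ j ∈ Finset.range K, (1 / (N : ℝ)) ^ j)⁻¹

/-!
Consider the entropy of a set of answers given the messages in `S`. Conditioning on a further
message lowers the entropy of a decoding set of that message by exactly `Lw`. Together with
subadditivity this yields the capacity bound, and at capacity every inequality used is an equality.
Hence the answers in a decoding set of `k ∉ S` are independent given the messages in `S`, while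
given the messages in `S ∪ {k}` any two of them carry the same information. The answers of a
database equivalent to a given answer over `S ∪ {k}` thus contain the disjoint classes over `S` of
the `N` answers of a decoding set, so a class over `S` has at least `N ^ (|S| - 1)` elements.

In the scheme attaining the bound a query is a tuple `x` with entries in `ℤ/N`, asked of the
database `∑ i, x i`. The queries retrieving message `k` agree outside coordinate `k`, so the other
messages contribute the same interference to all answers and the queries where message `k`
contributes zero reveal it. An answer has `N ^ K` bits, of which one is always zero.
-/

/-- A normalized, monotone and submodular set function. -/
structure IsPolymatroid {ι : Type*} [DecidableEq ι] (h : Finset ι → ℝ) : Prop where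
  empty : h ∅ = 0
  mono : Monotone h
  submodular : ∀ A B, h (A ∪ B) + h (A ∩ B) ≤ h A + h B

namespace IsPolymatroid

open Finset

variable {ι : Type*} [DecidableEq ι] {h h' : Finset ι → ℝ} {F : Finset ι} {a b c : ι}

theorem nonneg (hh : IsPolymatroid h) (A : Finset ι) : 0 ≤ h A :=
  hh.empty.symm.trans_le (hh.mono (empty_subset A))

theorem union_le (hh : IsPolymatroid h) (A B : Finset ι) : h (A ∪ B) ≤ h A + h B := by
  linarith [hh.submodular A B, hh.nonneg (A ∩ B)]

theorem le_sum_singleton (hh : IsPolymatroid h) (A : Finset ι) : h A ≤ ∑ a ∈ A, h {a} := by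
  induction A using Finset.induction_on with
  | empty => simp [hh.empty]
  | insert a A ha ih =>
    rw [sum_insert ha, insert_eq]
    exact (hh.union_le {a} A).trans (by gcongr)

theorem eq_sum_singleton_of_subset (hh : IsPolymatroid h) {A B : Finset ι} (hAB : A ⊆ B)
    (hB : h B = ∑ b ∈ B, h {b}) : h A = ∑ a ∈ A, h {a} := by
  refine (hh.le_sum_singleton A).antisymm ?_
  have hcover := hh.union_le (B \ A) A
  rw [sdiff_union_of_subset hAB, hB, ← sum_sdiff hAB] at hcover
  linarith [hh.le_sum_singleton (B \ A)]

/-- Two elements are parallel if each lies in the closure of the other. When `h` is the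
conditional entropy given `Z`, this is the relation `FinProbSpace.sameInfo` beyond `Z`. -/
def Parallel (h : Finset ι → ℝ) (a b : ι) : Prop :=
  h {a, b} = h {a} ∧ h {a, b} = h {b}

theorem Parallel.symm (hab : Parallel h a b) : Parallel h b a := by
  rw [Parallel, pair_comm]
  exact And.symm hab

theorem Parallel.trans (hab : Parallel h a b) (hbc : Parallel h b c) (hh : IsPolymatroid h) :
    Parallel h a c := by
  have hsub := hh.submodular {a, b} {b, c}
  have hunion : h {a, c} ≤ h ({a, b} ∪ {b, c}) := hh.mono (by grind)
  have hinter : h {b} ≤ h ({a, b} ∩ {b, c}) := hh.mono (by grind)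
  have ha : h {a} ≤ h {a, c} := hh.mono (by grind)
  have hc : h {c} ≤ h {a, c} := hh.mono (by grind)
  constructor <;> linarith [hab.1, hab.2, hbc.1, hbc.2]

theorem Parallel.of_monotone_sub (hab : Parallel h a b) (hh' : Monotone h')
    (hsub : Monotone (h - h')) : Parallel h' a b := by
  have hle : ∀ c ∈ ({a, b} : Finset ι), h {a, b} = h {c} → h' {a, b} = h' {c} := by
    intro c hc heq
    have hdiff := hsub (singleton_subset_iff.2 hc)
    simp only [Pi.sub_apply] at hdiff
    linarith [hh' (singleton_subset_iff.2 hc)]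
  exact ⟨hle a (by simp) hab.1, hle b (by simp) hab.2⟩

theorem parallel_of_mem (hh : Monotone h) (ha : a ∈ F) (hb : b ∈ F)
    (hFa : h F = h {a}) (hFb : h F = h {b}) : Parallel h a b := by
  have hpair : h {a, b} ≤ h F := hh (by grind)
  have hsingle : h {a} ≤ h {a, b} := hh (by grind)
  constructor <;> linarith

theorem not_parallel_of_eq_sum (hh : IsPolymatroid h) (hF : h F = ∑ c ∈ F, h {c})
    (ha : a ∈ F) (hb : b ∈ F) (hab : a ≠ b) (hpos : 0 < h {b}) : ¬ Parallel h a b := by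
  intro hpar
  have hpair := hh.eq_sum_singleton_of_subset (A := {a, b}) (by grind) hF
  rw [sum_pair hab] at hpair
  linarith [hpar.1]

theorem singleton_add_le_sum_singleton (hh : IsPolymatroid h) (hh' : Monotone h') {L : ℝ}
    (hF : h F = h' F + L) (ha : a ∈ F) : h' {a} + L ≤ ∑ c ∈ F, h {c} := by
  linarith [hh.le_sum_singleton F, hh' (singleton_subset_iff.2 ha)]

theorem eq_sum_singleton_and_eq_singleton (hh : IsPolymatroid h) (hh' : Monotone h') {L : ℝ}
    (hF : h F = h' F + L) (ha : a ∈ F) (heq : h' {a} + L = ∑ c ∈ F, h {c}) :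
    h F = ∑ c ∈ F, h {c} ∧ h' F = h' {a} := by
  have hle := hh.le_sum_singleton F
  have hge := hh' (singleton_subset_iff.2 ha)
  constructor <;> linarith

end IsPolymatroid

namespace FinProbSpace

open Finset Function

variable (P : FinProbSpace) {α β γ δ : Type}

theorem prob_nonneg [DecidableEq α] (X : P.Ω → α) (a : α) : 0 ≤ P.prob X a :=
  sum_nonneg fun ω _ => by split_ifs <;> simp [P.nonneg]

theorem prob_pos [DecidableEq α] (X : P.Ω → α) {ω : P.Ω} (hω : 0 < P.p ω) :
    0 < P.prob X (X ω) :=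
  sum_pos' (fun ω' _ => by split_ifs <;> simp [P.nonneg]) ⟨ω, mem_univ ω, by simpa using hω⟩

theorem sum_prob_mul [Fintype α] [DecidableEq α] (X : P.Ω → α) (f : α → ℝ) :
    ∑ a, P.prob X a * f a = ∑ ω, P.p ω * f (X ω) := by
  simp only [prob, sum_mul, ite_mul, zero_mul]
  rw [sum_comm]
  simp

theorem sum_prob [Fintype α] [DecidableEq α] (X : P.Ω → α) : ∑ a, P.prob X a = 1 := by
  simpa [P.sum_one] using P.sum_prob_mul X fun _ => 1

theorem sum_prob_prodMk [Fintype α] [DecidableEq α] [DecidableEq γ] (X : P.Ω → α)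
    (Z : P.Ω → γ) (c : γ) : ∑ a, P.prob (fun ω => (X ω, Z ω)) (a, c) = P.prob Z c := by
  simp only [prob, Prod.mk.injEq, ite_and]
  rw [sum_comm]
  simp

theorem H_eq_neg_sum [Fintype α] [DecidableEq α] (X : P.Ω → α) :
    P.H X = -∑ ω, P.p ω * Real.logb 2 (P.prob X (X ω)) := by
  rw [H, sum_neg_distrib, P.sum_prob_mul X fun a => Real.logb 2 (P.prob X a)]

theorem H_le_of_factorsThrough [Fintype α] [DecidableEq α] [Fintype β] [DecidableEq β]
    {X : P.Ω → α} {Y : P.Ω → β} (hYX : Y.FactorsThrough X) : P.H Y ≤ P.H X := by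
  rw [H_eq_neg_sum, H_eq_neg_sum, neg_le_neg_iff]
  refine sum_le_sum fun ω _ => ?_
  rcases (P.nonneg ω).eq_or_lt with hω | hω
  · simp [← hω]
  refine mul_le_mul_of_nonneg_left ?_ hω.le
  refine Real.logb_le_logb_of_le one_lt_two (P.prob_pos X hω) (sum_le_sum fun ω' _ => ?_)
  by_cases hX : X ω' = X ω
  · simp [hX, hYX hX]
  · rw [if_neg hX]
    split_ifs <;> simp [P.nonneg]

theorem H_congr [Fintype α] [DecidableEq α] [Fintype β] [DecidableEq β]
    {X : P.Ω → α} {Y : P.Ω → β} (h : ∀ ω ω', X ω = X ω' ↔ Y ω = Y ω') : P.H X = P.H Y := by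
  simp only [H_eq_neg_sum, prob, h]

theorem H_eq_zero_of_subsingleton [Fintype α] [DecidableEq α] {X : P.Ω → α}
    (hX : ∀ ω ω', X ω = X ω') : P.H X = 0 := by
  have hprob : ∀ ω, P.prob X (X ω) = 1 := fun ω => by simp [prob, hX _ ω, P.sum_one]
  simp [H_eq_neg_sum, hprob]

theorem sum_mul_logb_nonpos {r : P.Ω → ℝ} (hr : ∀ ω, 0 < P.p ω → 0 < r ω)
    (hsum : ∑ ω, P.p ω * r ω ≤ 1) : ∑ ω, P.p ω * Real.logb 2 (r ω) ≤ 0 := by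
  have hlog2 : 0 < Real.log 2 := Real.log_pos one_lt_two
  calc ∑ ω, P.p ω * Real.logb 2 (r ω)
      ≤ ∑ ω, P.p ω * ((r ω - 1) / Real.log 2) := by
        refine sum_le_sum fun ω _ => ?_
        rcases (P.nonneg ω).eq_or_lt with hω | hω
        · simp [← hω]
        rw [Real.logb]
        gcongr
        exact Real.log_le_sub_one_of_pos (hr ω hω)
    _ = (∑ ω, P.p ω * r ω - 1) / Real.log 2 := by
        simp only [← mul_div_assoc, ← sum_div, mul_sub, sum_sub_distrib, mul_one, P.sum_one]
    _ ≤ 0 := div_nonpos_of_nonpos_of_nonneg (by linarith) hlog2.le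

theorem sum_mul_prob_ratio_le_one [Finite α] [DecidableEq α] [Finite β] [DecidableEq β]
    [Finite γ] [DecidableEq γ] (X : P.Ω → α) (Y : P.Ω → β) (Z : P.Ω → γ) :
    ∑ ω, P.p ω * (P.prob (fun ω => (X ω, Z ω)) (X ω, Z ω) *
      P.prob (fun ω => (Y ω, Z ω)) (Y ω, Z ω) /
      (P.prob (fun ω => (X ω, Y ω, Z ω)) (X ω, Y ω, Z ω) * P.prob Z (Z ω))) ≤ 1 := by
  have := Fintype.ofFinite α
  have := Fintype.ofFinite β
  have := Fintype.ofFinite γ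
  set pXZ := P.prob fun ω => (X ω, Z ω)
  set pYZ := P.prob fun ω => (Y ω, Z ω)
  set pXYZ := P.prob fun ω => (X ω, Y ω, Z ω)
  have hXZ : ∀ t, 0 ≤ pXZ t := P.prob_nonneg _
  have hYZ : ∀ t, 0 ≤ pYZ t := P.prob_nonneg _
  calc ∑ ω, P.p ω * (pXZ (X ω, Z ω) * pYZ (Y ω, Z ω) / (pXYZ (X ω, Y ω, Z ω) * P.prob Z (Z ω)))
      = ∑ t, pXYZ t * (pXZ (t.1, t.2.2) * pYZ t.2 / (pXYZ t * P.prob Z t.2.2)) :=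
        (P.sum_prob_mul (fun ω => (X ω, Y ω, Z ω)) fun t =>
          pXZ (t.1, t.2.2) * pYZ t.2 / (pXYZ t * P.prob Z t.2.2)).symm
    _ ≤ ∑ t : α × β × γ, pXZ (t.1, t.2.2) * pYZ t.2 / P.prob Z t.2.2 := by
        refine sum_le_sum fun t _ => ?_
        by_cases ht : pXYZ t = 0
        · rw [ht, zero_mul]
          exact div_nonneg (mul_nonneg (hXZ _) (hYZ _)) (P.prob_nonneg _ _)
        · rw [← mul_div_assoc, mul_div_mul_left _ _ ht]
    _ = ∑ z, P.prob Z z * P.prob Z z / P.prob Z z := by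
        simp only [Fintype.sum_prod_type]
        simp only [sum_comm (t := (univ : Finset γ)), ← sum_div, ← sum_mul_sum, pXZ, pYZ,
          P.sum_prob_prodMk]
    _ = 1 := by simp only [mul_self_div_self, P.sum_prob]

theorem H_prod_submodular [Fintype α] [DecidableEq α] [Fintype β] [DecidableEq β]
    [Fintype γ] [DecidableEq γ] (X : P.Ω → α) (Y : P.Ω → β) (Z : P.Ω → γ) :
    P.H (fun ω => (X ω, Y ω, Z ω)) + P.H Z ≤
      P.H (fun ω => (X ω, Z ω)) + P.H (fun ω => (Y ω, Z ω)) := by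
  have hpos {ε : Type} [DecidableEq ε] (V : P.Ω → ε) {ω : P.Ω} (hω : 0 < P.p ω) :=
    P.prob_pos V hω
  have hratio := P.sum_mul_logb_nonpos (fun ω hω => div_pos
    (mul_pos (hpos (fun ω => (X ω, Z ω)) hω) (hpos (fun ω => (Y ω, Z ω)) hω))
    (mul_pos (hpos (fun ω => (X ω, Y ω, Z ω)) hω) (hpos Z hω)))
    (P.sum_mul_prob_ratio_le_one X Y Z)
  have hlog : ∀ ω, P.p ω * Real.logb 2 (P.prob (fun ω => (X ω, Z ω)) (X ω, Z ω) *
        P.prob (fun ω => (Y ω, Z ω)) (Y ω, Z ω) /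
        (P.prob (fun ω => (X ω, Y ω, Z ω)) (X ω, Y ω, Z ω) * P.prob Z (Z ω))) =
      P.p ω * Real.logb 2 (P.prob (fun ω => (X ω, Z ω)) (X ω, Z ω)) +
        P.p ω * Real.logb 2 (P.prob (fun ω => (Y ω, Z ω)) (Y ω, Z ω)) -
        (P.p ω * Real.logb 2 (P.prob (fun ω => (X ω, Y ω, Z ω)) (X ω, Y ω, Z ω)) +
          P.p ω * Real.logb 2 (P.prob Z (Z ω))) := by
    intro ω
    rcases (P.nonneg ω).eq_or_lt with hω | hω
    · simp [← hω]
    rw [Real.logb_div, Real.logb_mul, Real.logb_mul, mul_sub, mul_add, mul_add] <;>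
      simp [(hpos _ hω).ne']
  simp only [hlog, sum_sub_distrib, sum_add_distrib] at hratio
  simp only [H_eq_neg_sum]
  linarith

theorem H_add_H_le_of_factorsThrough [Fintype α] [DecidableEq α] [Fintype β] [DecidableEq β]
    [Fintype γ] [DecidableEq γ] [Fintype δ] [DecidableEq δ] {X : P.Ω → α} {Y : P.Ω → β}
    {Z : P.Ω → γ} {U : P.Ω → δ} (hU : U.FactorsThrough fun ω => (X ω, Y ω))
    (hZX : Z.FactorsThrough X) (hZY : Z.FactorsThrough Y) :
    P.H U + P.H Z ≤ P.H X + P.H Y := by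
  calc P.H U + P.H Z ≤ P.H (fun ω => (X ω, Y ω, Z ω)) + P.H Z := by
        gcongr
        refine P.H_le_of_factorsThrough fun ω ω' h => hU ?_
        simp_all
    _ ≤ P.H (fun ω => (X ω, Z ω)) + P.H (fun ω => (Y ω, Z ω)) := P.H_prod_submodular X Y Z
    _ = P.H X + P.H Y := by
        congr 1 <;> refine P.H_congr fun ω ω' => ?_ <;> rw [Prod.mk.injEq]
        exacts [and_iff_left_of_imp (@hZX ω ω'), and_iff_left_of_imp (@hZY ω ω')]

theorem H_eq_of_condH_eq_zero [Fintype α] [DecidableEq α] [Fintype β] [DecidableEq β]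
    [Fintype γ] [DecidableEq γ] [Fintype δ] [DecidableEq δ] {X : P.Ω → α} {Y : P.Ω → β}
    {Z : P.Ω → γ} {U : P.Ω → δ} (hYX : P.condH Y X = 0) (hXZ : X.FactorsThrough Z)
    (hZU : Z.FactorsThrough U) (hUZY : U.FactorsThrough fun ω => (Z ω, Y ω)) :
    P.H U = P.H Z := by
  refine le_antisymm ?_ (P.H_le_of_factorsThrough hZU)
  have hsub := P.H_add_H_le_of_factorsThrough (X := Z) (Y := fun ω => (Y ω, X ω)) (Z := X) (U := U)
    (fun ω ω' h => hUZY (by simp_all)) hXZ (fun ω ω' h => (Prod.mk.inj h).2)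
  rw [condH] at hYX
  linarith

theorem H_tuple_of_iIndep {ι V : Type} [Fintype ι] [DecidableEq ι] [Fintype V] [DecidableEq V]
    {X : ι → P.Ω → V} (hX : P.iIndep X) : P.H (P.tuple X) = ∑ i, P.H (X i) := by
  simp only [H_eq_neg_sum, sum_neg_distrib]
  rw [sum_comm]
  congr 1
  refine sum_congr rfl fun ω _ => ?_
  rw [← mul_sum]
  rcases (P.nonneg ω).eq_or_lt with hω | hω
  · simp [← hω]
  rw [hX]
  exact congrArg _ (Real.logb_prod _ _ fun i _ => (P.prob_pos (X i) hω).ne')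

theorem condH_of_subsingleton [Fintype α] [DecidableEq α] [Fintype γ] [DecidableEq γ]
    (X : P.Ω → α) {Z : P.Ω → γ} (hZ : ∀ ω ω', Z ω = Z ω') : P.condH X Z = P.H X := by
  rw [condH, P.H_eq_zero_of_subsingleton hZ, sub_zero]
  exact P.H_congr fun ω ω' => by simp [hZ ω ω']

theorem tuple_restrict_eq_iff {ι V : Type} (X : ι → P.Ω → V) (A : Finset ι) (ω ω' : P.Ω) :
    P.tuple (fun i : A => X i) ω = P.tuple (fun i : A => X i) ω' ↔
      ∀ i ∈ A, X i ω = X i ω' := by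
  simp [tuple, funext_iff]

section condJointH

variable {ι V : Type} [DecidableEq ι] [Fintype V] [DecidableEq V] [Fintype γ] [DecidableEq γ]
  [Fintype δ] [DecidableEq δ]

/-- The set function `A ↦ H(X_A | Z)` of a family `X` of random variables. -/
def condJointH (X : ι → P.Ω → V) (Z : P.Ω → γ) (A : Finset ι) : ℝ :=
  P.condH (P.tuple fun i : A => X i) Z

theorem isPolymatroid_condJointH (X : ι → P.Ω → V) (Z : P.Ω → γ) :
    IsPolymatroid (P.condJointH X Z) where
  empty := by
    rw [condJointH, condH, sub_eq_zero]
    exact P.H_congr fun ω ω' => by simp [tuple_restrict_eq_iff]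
  mono A B hAB := by
    refine sub_le_sub_right (P.H_le_of_factorsThrough fun ω ω' h => ?_) _
    simp only [Prod.mk.injEq, tuple_restrict_eq_iff] at h ⊢
    exact ⟨fun i hi => h.1 i (hAB hi), h.2⟩
  submodular A B := by
    simp only [condJointH, condH]
    have hsub := P.H_add_H_le_of_factorsThrough
      (U := fun ω => (P.tuple (fun i : ↥(A ∪ B) => X i) ω, Z ω))
      (Z := fun ω => (P.tuple (fun i : ↥(A ∩ B) => X i) ω, Z ω))
      (X := fun ω => (P.tuple (fun i : A => X i) ω, Z ω))
      (Y := fun ω => (P.tuple (fun i : B => X i) ω, Z ω))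
      (fun ω ω' h => by simp only [Prod.mk.injEq, tuple_restrict_eq_iff] at h ⊢; grind)
      (fun ω ω' h => by simp only [Prod.mk.injEq, tuple_restrict_eq_iff] at h ⊢; grind)
      (fun ω ω' h => by simp only [Prod.mk.injEq, tuple_restrict_eq_iff] at h ⊢; grind)
    linarith

theorem monotone_condJointH_sub (X : ι → P.Ω → V) {Z : P.Ω → γ} {Z' : P.Ω → δ}
    (hZ : Z.FactorsThrough Z') : Monotone (P.condJointH X Z - P.condJointH X Z') := by
  intro A B hAB
  have hsub := P.H_add_H_le_of_factorsThrough (U := fun ω => (P.tuple (fun i : B => X i) ω, Z' ω))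
    (Z := fun ω => (P.tuple (fun i : A => X i) ω, Z ω))
    (X := fun ω => (P.tuple (fun i : B => X i) ω, Z ω))
    (Y := fun ω => (P.tuple (fun i : A => X i) ω, Z' ω))
    (fun ω ω' h => by grind)
    (fun ω ω' h => by simp only [Prod.mk.injEq, tuple_restrict_eq_iff] at h ⊢; grind)
    (fun ω ω' h => by
      rw [Prod.mk.injEq] at h ⊢
      exact ⟨h.1, hZ h.2⟩)
  simp only [Pi.sub_apply, condJointH, condH]
  linarith

theorem condJointH_singleton (X : ι → P.Ω → V) (Z : P.Ω → γ) (i : ι) :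
    P.condJointH X Z {i} = P.condH (X i) Z :=
  congrArg (· - P.H Z) (P.H_congr fun ω ω' => by simp [tuple_restrict_eq_iff])

theorem H_tuple_restrict_of_iIndep [Fintype ι] {X : ι → P.Ω → V} (hX : P.iIndep X)
    (A : Finset ι) : P.H (P.tuple fun i : A => X i) = ∑ i ∈ A, P.H (X i) := by
  have hcond {β : Type} [Fintype β] [DecidableEq β] (Y : P.Ω → β) :
      P.condH Y (fun _ => ()) = P.H Y := P.condH_of_subsingleton Y fun _ _ => rfl
  have huniv : P.condJointH X (fun _ => ()) univ = ∑ i, P.condJointH X (fun _ => ()) {i} := by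
    simp only [condJointH_singleton, hcond, ← P.H_tuple_of_iIndep hX]
    rw [condJointH, hcond]
    exact P.H_congr fun ω ω' => by rw [tuple_restrict_eq_iff]; simp [tuple, funext_iff]
  have hA := (P.isPolymatroid_condJointH X fun _ => ()).eq_sum_singleton_of_subset
    (subset_univ A) huniv
  simp only [condJointH_singleton, hcond] at hA
  rwa [condJointH, hcond] at hA

end condJointH

end FinProbSpace

namespace IRScheme

open Finset IsPolymatroid

/-- The entropy of an answer given all but `m` messages in a capacity achieving scheme. -/
def tightEntropy (N : ℕ) (Lw : ℝ) (m : ℕ) : ℝ :=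
  Lw / N * ∑ j ∈ range m, (1 / (N : ℝ)) ^ j

theorem mul_tightEntropy_succ {N : ℕ} (hN : N ≠ 0) (Lw : ℝ) (m : ℕ) :
    N * tightEntropy N Lw (m + 1) = Lw + tightEntropy N Lw m := by
  rw [tightEntropy, tightEntropy, geom_sum_succ]
  field_simp
  ring

theorem tightEntropy_pos {N : ℕ} (hN : 0 < N) {Lw : ℝ} (hLw : 0 < Lw) {m : ℕ} (hm : m ≠ 0) :
    0 < tightEntropy N Lw m :=
  mul_pos (by positivity) (geom_sum_pos (by positivity) hm)

theorem eq_tightEntropy_of_rate_eq {K N : ℕ} (hN : N ≠ 0) {Lw Lx : ℝ} (hLw : Lw ≠ 0)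
    (hR : Lw / (N * Lx) = CK N K) : Lx = tightEntropy N Lw K := by
  rw [CK, ← inv_inj, inv_div, inv_inv] at hR
  rw [tightEntropy, ← hR]
  field_simp

variable {K N : ℕ} {Mn : Fin N → ℕ} {Lw Lx : ℝ} (C : IRScheme K N Mn Lw Lx)
  {S : Finset (Fin K)} {k : Fin K} {q : (n : Fin N) → Fin (Mn n)}

/-- The set of answers queried by `q`, an answer being a database with an answer index. -/
def answerSet (q : (n : Fin N) → Fin (Mn n)) : Finset (Σ n, Fin (Mn n)) :=
  univ.sigma fun n => {q n}

theorem mk_mem_answerSet (q : (n : Fin N) → Fin (Mn n)) (n : Fin N) : ⟨n, q n⟩ ∈ answerSet q := by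
  simp [answerSet]

theorem sum_answerSet (q : (n : Fin N) → Fin (Mn n)) (f : (Σ n, Fin (Mn n)) → ℝ) :
    ∑ b ∈ answerSet q, f b = ∑ n, f ⟨n, q n⟩ := by
  simp [answerSet, sum_sigma]

/-- The entropy of a set of answers given the messages in `S`. -/
def answerEntropy (S : Finset (Fin K)) : Finset (Σ n, Fin (Mn n)) → ℝ :=
  C.P.condJointH (fun b => C.A b.1 b.2) (C.P.tuple fun k : S => C.W k)

theorem isPolymatroid_answerEntropy (S : Finset (Fin K)) : IsPolymatroid (C.answerEntropy S) :=
  C.P.isPolymatroid_condJointH _ _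

theorem answerEntropy_empty_singleton (b : Σ n, Fin (Mn n)) : C.answerEntropy ∅ {b} = Lx := by
  rw [answerEntropy, FinProbSpace.condJointH_singleton,
    C.P.condH_of_subsingleton _ fun _ _ => Subsingleton.elim _ _, C.HA]

theorem monotone_answerEntropy_sub {S S' : Finset (Fin K)} (hS : S ⊆ S') :
    Monotone (C.answerEntropy S - C.answerEntropy S') :=
  C.P.monotone_condJointH_sub _ fun ω ω' h => by
    rw [FinProbSpace.tuple_restrict_eq_iff] at h ⊢
    exact fun k hk => h k (hS hk)

theorem H_tuple_messages (S : Finset (Fin K)) :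
    C.P.H (C.P.tuple fun k : S => C.W k) = #S * Lw := by
  simp [C.P.H_tuple_restrict_of_iIndep C.indep, C.HW]

theorem answerEntropy_answerSet_eq_add (hk : k ∉ S) (hq : q ∈ C.Q k) :
    C.answerEntropy S (answerSet q) = C.answerEntropy (insert k S) (answerSet q) + Lw := by
  let X := C.P.tuple fun b : answerSet q => C.A b.1.1 b.1.2
  let W (T : Finset (Fin K)) := C.P.tuple fun k : T => C.W k
  have hdecode : C.P.H (fun ω => (X ω, W (insert k S) ω)) = C.P.H fun ω => (X ω, W S ω) := by
    refine C.P.H_eq_of_condH_eq_zero (C.decodes k q hq) (fun ω ω' h => funext fun n => ?_)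
      (fun ω ω' h => ?_) (fun ω ω' h => ?_)
    · exact congrFun (Prod.mk.inj h).1 ⟨⟨n, q n⟩, mk_mem_answerSet q n⟩
    all_goals
      simp only [W, Prod.mk.injEq, FinProbSpace.tuple_restrict_eq_iff, forall_mem_insert] at h ⊢
      tauto
  simp only [answerEntropy, FinProbSpace.condJointH, FinProbSpace.condH, H_tuple_messages,
    card_insert_of_notMem hk]
  push_cast
  linarith

/-- The gap between `tightEntropy` and the entropy of the answer `b` given the messages in `S`. -/
def defect (S : Finset (Fin K)) (b : Σ n, Fin (Mn n)) : ℝ :=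
  tightEntropy N Lw #Sᶜ - C.answerEntropy S {b}

theorem card_compl_insert_add_one (hk : k ∉ S) : #(insert k S)ᶜ + 1 = #Sᶜ := by
  rw [compl_insert, card_erase_add_one (mem_compl.2 hk)]

theorem sum_defect_le_defect_insert (hk : k ∉ S) (hq : q ∈ C.Q k) (n : Fin N) :
    ∑ i, C.defect S ⟨i, q i⟩ ≤ C.defect (insert k S) ⟨n, q n⟩ := by
  have hlayer := (C.isPolymatroid_answerEntropy S).singleton_add_le_sum_singleton
    (C.isPolymatroid_answerEntropy _).mono (C.answerEntropy_answerSet_eq_add hk hq)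
    (mk_mem_answerSet q n)
  have hrec := mul_tightEntropy_succ n.pos.ne' Lw #(insert k S)ᶜ
  rw [sum_answerSet] at hlayer
  rw [card_compl_insert_add_one hk] at hrec
  simp only [defect, sum_sub_distrib, sum_const, card_univ, Fintype.card_fin, nsmul_eq_mul]
  linarith

open scoped Classical in
/-- The answers of database `n` carrying the same information as `b` beyond the messages in
`S`. -/
def parallelAnswers (S : Finset (Fin K)) (b : Σ n, Fin (Mn n)) (n : Fin N) :
    Finset (Fin (Mn n)) :=
  {m | Parallel (C.answerEntropy S) b ⟨n, m⟩}

theorem mem_parallelAnswers {b : Σ n, Fin (Mn n)} {n : Fin N} {m : Fin (Mn n)} :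
    m ∈ C.parallelAnswers S b n ↔ Parallel (C.answerEntropy S) b ⟨n, m⟩ := by
  simp [parallelAnswers]

section CapacityAchieving

variable {C} (hC : C.IsRIR) (hLx : Lx = tightEntropy N Lw K)

include hC hLx

theorem defect_nonneg (S : Finset (Fin K)) (b : Σ n, Fin (Mn n)) : 0 ≤ C.defect S b := by
  induction S using Finset.induction_on generalizing b with
  | empty => simp [defect, answerEntropy_empty_singleton, ← hLx]
  | insert k S hk ih =>
    obtain ⟨n, m⟩ := b
    obtain ⟨q, hq, rfl⟩ := hC n m k
    exact (sum_nonneg fun i _ => ih ⟨i, q i⟩).trans (C.sum_defect_le_defect_insert hk hq n)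

theorem monotone_defect (b : Σ n, Fin (Mn n)) : Monotone fun S => C.defect S b := by
  refine Finset.monotone_iff_forall_le_insert.2 fun S k hk => ?_
  obtain ⟨n, m⟩ := b
  obtain ⟨q, hq, rfl⟩ := hC n m k
  exact (single_le_sum (f := fun i => C.defect S ⟨i, q i⟩)
    (fun i _ => defect_nonneg hC hLx S ⟨i, q i⟩) (mem_univ n)).trans
    (C.sum_defect_le_defect_insert hk hq n)

theorem answerEntropy_singleton (S : Finset (Fin K)) (b : Σ n, Fin (Mn n)) :
    C.answerEntropy S {b} = tightEntropy N Lw #Sᶜ := by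
  have huniv : C.defect univ b ≤ 0 := by
    simpa [defect, tightEntropy] using (C.isPolymatroid_answerEntropy univ).nonneg {b}
  have hle : C.defect S b ≤ C.defect univ b := monotone_defect hC hLx b (subset_univ S)
  have hzero := (hle.trans huniv).antisymm (defect_nonneg hC hLx S b)
  exact (sub_eq_zero.1 hzero).symm

theorem answerEntropy_answerSet_tight (hk : k ∉ S) (hq : q ∈ C.Q k) (n : Fin N) :
    C.answerEntropy S (answerSet q) = ∑ b ∈ answerSet q, C.answerEntropy S {b} ∧
      C.answerEntropy (insert k S) (answerSet q) = C.answerEntropy (insert k S) {⟨n, q n⟩} := by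
  refine (C.isPolymatroid_answerEntropy S).eq_sum_singleton_and_eq_singleton
    (C.isPolymatroid_answerEntropy _).mono (C.answerEntropy_answerSet_eq_add hk hq)
    (mk_mem_answerSet q n) ?_
  have hrec := mul_tightEntropy_succ n.pos.ne' Lw #(insert k S)ᶜ
  rw [card_compl_insert_add_one hk] at hrec
  rw [sum_answerSet]
  simp only [answerEntropy_singleton hC hLx, sum_const, card_univ, Fintype.card_fin, nsmul_eq_mul]
  linarith

theorem parallel_answerEntropy_insert (hk : k ∉ S) (hq : q ∈ C.Q k) (i j : Fin N) :
    Parallel (C.answerEntropy (insert k S)) ⟨i, q i⟩ ⟨j, q j⟩ :=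
  parallel_of_mem (C.isPolymatroid_answerEntropy _).mono (mk_mem_answerSet q i)
    (mk_mem_answerSet q j) (answerEntropy_answerSet_tight hC hLx hk hq i).2
    (answerEntropy_answerSet_tight hC hLx hk hq j).2

theorem not_parallel_answerEntropy (hLw : 0 < Lw) (hk : k ∉ S) (hq : q ∈ C.Q k)
    {i j : Fin N} (hij : i ≠ j) :
    ¬ Parallel (C.answerEntropy S) ⟨i, q i⟩ ⟨j, q j⟩ := by
  refine (C.isPolymatroid_answerEntropy S).not_parallel_of_eq_sum
    (answerEntropy_answerSet_tight hC hLx hk hq i).1 (mk_mem_answerSet q i)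
    (mk_mem_answerSet q j) (by simp [hij]) ?_
  rw [answerEntropy_singleton hC hLx, ← card_compl_insert_add_one hk]
  exact tightEntropy_pos i.pos hLw (Nat.succ_ne_zero _)

theorem parallelAnswers_subset_insert (hk : k ∉ S) (hq : q ∈ C.Q k) (i j n : Fin N) :
    C.parallelAnswers S ⟨j, q j⟩ n ⊆ C.parallelAnswers (insert k S) ⟨i, q i⟩ n := by
  intro m hm
  rw [mem_parallelAnswers] at hm ⊢
  exact (parallel_answerEntropy_insert hC hLx hk hq i j).trans
    (hm.of_monotone_sub (C.isPolymatroid_answerEntropy _).mono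
      (C.monotone_answerEntropy_sub (subset_insert k S))) (C.isPolymatroid_answerEntropy _)

theorem disjoint_parallelAnswers (hLw : 0 < Lw) (hk : k ∉ S) (hq : q ∈ C.Q k) {i j : Fin N}
    (hij : i ≠ j) (n : Fin N) :
    Disjoint (C.parallelAnswers S ⟨i, q i⟩ n) (C.parallelAnswers S ⟨j, q j⟩ n) := by
  refine disjoint_left.2 fun m hi hj => ?_
  rw [mem_parallelAnswers] at hi hj
  exact not_parallel_answerEntropy hC hLx hLw hk hq hij
    (hi.trans hj.symm (C.isPolymatroid_answerEntropy S))

theorem pow_le_card_parallelAnswers (hLw : 0 < Lw) (hS : S.Nonempty) (b : Σ n, Fin (Mn n))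
    (n : Fin N) : N ^ (#S - 1) ≤ #(C.parallelAnswers S b n) := by
  induction hS using Finset.Nonempty.cons_induction generalizing b with
  | singleton k =>
    obtain ⟨i, m⟩ := b
    obtain ⟨q, hq, rfl⟩ := hC i m k
    have hmem : q n ∈ C.parallelAnswers {k} ⟨i, q i⟩ n :=
      C.mem_parallelAnswers.2 (parallel_answerEntropy_insert hC hLx (notMem_empty k) hq i n)
    simpa using card_pos.2 ⟨_, hmem⟩
  | cons k S hk hS ih =>
    obtain ⟨i, m⟩ := b
    obtain ⟨q, hq, rfl⟩ := hC i m k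
    rw [card_cons, Nat.add_sub_cancel, cons_eq_insert]
    calc N ^ #S = ∑ _j : Fin N, N ^ (#S - 1) := by
          rw [sum_const, card_univ, Fintype.card_fin, smul_eq_mul,
            mul_pow_sub_one hS.card_pos.ne']
      _ ≤ ∑ j, #(C.parallelAnswers S ⟨j, q j⟩ n) := sum_le_sum fun j _ => ih ⟨j, q j⟩
      _ = #(univ.biUnion fun j => C.parallelAnswers S ⟨j, q j⟩ n) :=
          (card_biUnion fun _ _ _ _ hjj' =>
            disjoint_parallelAnswers hC hLx hLw hk hq hjj' n).symm
      _ ≤ #(C.parallelAnswers (insert k S) ⟨i, q i⟩ n) :=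
          card_le_card (biUnion_subset.2 fun j _ =>
            parallelAnswers_subset_insert hC hLx hk hq i j n)

end CapacityAchieving

theorem pow_le_of_rate_eq_CK {C : IRScheme K N Mn Lw Lx} (hC : C.IsRIR) (hK : 1 ≤ K)
    (hLw : 0 < Lw) (hR : Lw / (N * Lx) = CK N K) (n : Fin N) : N ^ (K - 1) ≤ Mn n := by
  have hLx := eq_tightEntropy_of_rate_eq n.pos.ne' hLw.ne' hR
  obtain ⟨q, -⟩ := C.Q_nonempty ⟨0, hK⟩
  have hcard := pow_le_card_parallelAnswers hC hLx hLw (S := univ) ⟨⟨0, hK⟩, mem_univ _⟩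
    ⟨n, q n⟩ n
  simpa using hcard.trans (card_le_univ _)

end IRScheme

namespace FinProbSpace

open Finset Function

/-- The uniform distribution on a nonempty finite type. -/
abbrev uniform (Ω : Type) [Fintype Ω] [Nonempty Ω] : FinProbSpace where
  Ω := Ω
  p _ := (Fintype.card Ω : ℝ)⁻¹
  nonneg _ := by positivity
  sum_one := by simp

variable {Ω α G : Type} [Fintype Ω]

theorem prob_uniform [Nonempty Ω] [DecidableEq α] (X : Ω → α) (a : α) :
    (uniform Ω).prob X a = #{ω | X ω = a} * (Fintype.card Ω : ℝ)⁻¹ := by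
  rw [← nsmul_eq_mul, ← sum_const, sum_filter]
  rfl

variable [AddGroup Ω] [Fintype G] [AddGroup G] [DecidableEq G]

theorem prob_uniform_of_surjective (φ : Ω →+ G) (hφ : Surjective φ) (a : G) :
    (uniform Ω).prob φ a = (Fintype.card G : ℝ)⁻¹ := by
  have hconst : ∀ b, (uniform Ω).prob φ b = (uniform Ω).prob φ a := fun b => by
    rw [prob_uniform, prob_uniform, AddMonoidHom.card_fiber_eq_of_mem_range φ (hφ b) (hφ a)]
  have hsum := (uniform Ω).sum_prob φ
  simp only [hconst, sum_const, card_univ, nsmul_eq_mul] at hsum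
  exact eq_inv_of_mul_eq_one_right hsum

theorem H_uniform_of_surjective (φ : Ω →+ G) (hφ : Surjective φ) {m : ℕ}
    (hG : Fintype.card G = 2 ^ m) : (uniform Ω).H φ = m := by
  simp [H, prob_uniform_of_surjective φ hφ, hG, Real.logb_pow]

theorem iIndep_uniform_eval {ι V : Type} [Fintype ι] [DecidableEq ι] [Fintype V] [AddGroup V]
    [DecidableEq V] : (uniform (ι → V)).iIndep fun i ω => ω i := by
  intro a
  have heval : ∀ i, (uniform (ι → V)).prob (fun ω => ω i) (a i) = (Fintype.card V : ℝ)⁻¹ :=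
    fun i => prob_uniform_of_surjective (Pi.evalAddMonoidHom (fun _ : ι => V) i)
      (surjective_eval i) (a i)
  have htuple : (uniform (ι → V)).prob (fun ω => ω) a = (Fintype.card (ι → V) : ℝ)⁻¹ :=
    prob_uniform_of_surjective (AddMonoidHom.id (ι → V)) surjective_id a
  refine htuple.trans ?_
  simp [heval]

end FinProbSpace

namespace GroupScheme

open Finset Function FinProbSpace

section Code

variable {κ G : Type} [AddCommGroup G]

/-- A message over the set `κ` of messages and the set `G` of databases: one block for each
`s : κ → G`, consisting of one bit for each nonzero element of `G`. -/
abbrev Message (κ G : Type) [AddCommGroup G] : Type :=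
  (κ → G) → {g : G // g ≠ 0} → ZMod 2

/-- The bits of a block, extended by `0` to the zero element of `G`. -/
def entry : ({g : G // g ≠ 0} → ZMod 2) →+ (G → ZMod 2) where
  toFun w := extend Subtype.val w 0
  map_zero' := extend_zero _
  map_add' w w' := by simpa using extend_add Subtype.val w w' 0 0

theorem entry_zero (w : {g : G // g ≠ 0} → ZMod 2) : entry w 0 = 0 :=
  extend_apply' _ _ _ fun ⟨g, hg⟩ => g.2 hg

theorem entry_coe (w : {g : G // g ≠ 0} → ZMod 2) (g : {g : G // g ≠ 0}) : entry w g = w g :=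
  Subtype.val_injective.extend_apply _ _ _

variable [Fintype κ]

/-- The answer to the query `x`: its bit in block `s` is the sum over the messages `k` of the bit
of message `k` at `x k + s k`. -/
def answer (x : κ → G) : (κ → Message κ G) →+ ((κ → G) → ZMod 2) where
  toFun ω s := ∑ k, entry (ω k s) (x k + s k)
  map_zero' := by
    ext
    simp
  map_add' ω ω' := by
    ext
    simp [sum_add_distrib]

theorem answer_apply (x : κ → G) (ω : κ → Message κ G) (s : κ → G) :
    answer x ω s = ∑ k, entry (ω k s) (x k + s k) := rfl

theorem answer_apply_neg (x : κ → G) (ω : κ → Message κ G) : answer x ω (-x) = 0 := by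
  simp [answer_apply, entry_zero]

/-- The answer to the query `x` without its block `-x`, which is always `0`. -/
def reducedAnswer (x : κ → G) : (κ → Message κ G) →+ ({s : κ → G // s ≠ -x} → ZMod 2) where
  toFun ω s := answer x ω s
  map_zero' := by
    ext
    simp
  map_add' ω ω' := by
    ext
    simp

theorem reducedAnswer_eq_iff (x : κ → G) (ω ω' : κ → Message κ G) :
    reducedAnswer x ω = reducedAnswer x ω' ↔ answer x ω = answer x ω' := by
  refine ⟨fun h => funext fun s => ?_, fun h => funext fun s => congrFun h s⟩
  rcases eq_or_ne s (-x) with rfl | hs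
  · rw [answer_apply_neg, answer_apply_neg]
  · exact congrFun h ⟨s, hs⟩

theorem reducedAnswer_surjective (x : κ → G) : Surjective (reducedAnswer x) := by
  classical
  intro v
  have hex : ∀ s : {s : κ → G // s ≠ -x}, ∃ k, x k + s.1 k ≠ 0 := by
    rintro ⟨s, hs⟩
    by_contra! h
    exact hs (funext fun k => eq_neg_of_add_eq_zero_right (h k))
  choose pos hpos using hex
  refine ⟨fun k s _ => if hs : s ≠ -x then if pos ⟨s, hs⟩ = k then v ⟨s, hs⟩ else 0 else 0, ?_⟩
  ext s
  change ∑ k, entry _ _ = v s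
  rw [sum_eq_single (pos s)]
  · refine (entry_coe _ ⟨_, hpos s⟩).trans ?_
    simp [s.2]
  · intro k _ hk
    simp only [hk.symm]
    simp [← Pi.zero_def]
  · simp

variable [DecidableEq κ]

theorem answer_add_single (x : κ → G) (k : κ) (d : G) (ω : κ → Message κ G) (s : κ → G) :
    answer (x + Pi.single k d) ω s =
      entry (ω k s) (x k + d + s k) + ∑ j ∈ univ.erase k, entry (ω j s) (x j + s j) := by
  rw [answer_apply, ← add_sum_erase univ _ (mem_univ k)]
  congr 1
  · simp
  · exact sum_congr rfl fun j hj => by simp [ne_of_mem_erase hj]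

theorem eq_of_answer_add_single_eq {k : κ} {x : κ → G} {ω ω' : κ → Message κ G}
    (h : ∀ d, answer (x + Pi.single k d) ω = answer (x + Pi.single k d) ω') : ω k = ω' k := by
  ext s g
  let interference (υ : κ → Message κ G) := ∑ j ∈ univ.erase k, entry (υ j s) (x j + s j)
  have hadd : ∀ t, entry (ω k s) t + interference ω = entry (ω' k s) t + interference ω' := by
    intro t
    have hblock := congrFun (h (t - x k - s k)) s
    rw [answer_add_single, answer_add_single] at hblock
    rwa [show x k + (t - x k - s k) + s k = t by abel] at hblock
  have hinterference := hadd 0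
  rw [entry_zero, entry_zero, zero_add, zero_add] at hinterference
  have hg := hadd g
  rw [hinterference, entry_coe, entry_coe] at hg
  exact add_right_cancel hg

/-- The query sent to database `n` to retrieve message `k` with randomness `x`. Database `n` only
receives queries with sum `n`. -/
def query (k : κ) (x : κ → G) (n : G) : κ → G :=
  x + Pi.single k (n - ∑ i, x i)

theorem sum_query (k : κ) (x : κ → G) (n : G) : ∑ i, query k x n i = n := by
  simp [query, sum_add_distrib]

theorem query_sum (k : κ) (x : κ → G) : query k x (∑ i, x i) = x := by
  simp [query]

theorem eq_of_answer_query_eq {k : κ} {x : κ → G} {ω ω' : κ → Message κ G}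
    (h : ∀ n, answer (query k x n) ω = answer (query k x n) ω') : ω k = ω' k :=
  eq_of_answer_add_single_eq fun d => by simpa [query] using h (d + ∑ i, x i)

variable [Fintype G] [DecidableEq G]

theorem H_answer (x : κ → G) :
    (uniform (κ → Message κ G)).H (answer x) = (Fintype.card G : ℝ) ^ Fintype.card κ - 1 := by
  have hcard : Fintype.card ({s : κ → G // s ≠ -x} → ZMod 2) =
      2 ^ (Fintype.card G ^ Fintype.card κ - 1) := by
    simp [Fintype.card_subtype_compl]
  rw [← H_congr _ (reducedAnswer_eq_iff x),
    H_uniform_of_surjective _ (reducedAnswer_surjective x) hcard,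
    Nat.cast_pred (pow_pos Fintype.card_pos _), Nat.cast_pow]

theorem H_message (k : κ) : (uniform (κ → Message κ G)).H (fun ω => ω k) =
    (Fintype.card G : ℝ) ^ Fintype.card κ * (Fintype.card G - 1) := by
  have hcard : Fintype.card (Message κ G) =
      2 ^ (Fintype.card G ^ Fintype.card κ * (Fintype.card G - 1)) := by
    simp [Fintype.card_subtype_compl, ← pow_mul, mul_comm]
  refine (H_uniform_of_surjective (Pi.evalAddMonoidHom (fun _ : κ => Message κ G) k)
    (surjective_eval k) hcard).trans ?_
  rw [Nat.cast_mul, Nat.cast_pred Fintype.card_pos, Nat.cast_pow]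

end Code

section Index

variable {K : ℕ} {G : Type} [AddCommGroup G]

/-- The tuple with sum `n` and tail `y`. -/
def consWithSum (n : G) (y : Fin K → G) : Fin (K + 1) → G :=
  Fin.cons (n - ∑ i, y i) y

theorem sum_consWithSum (n : G) (y : Fin K → G) : ∑ i, consWithSum n y i = n := by
  simp [consWithSum, Fin.sum_univ_succ]

theorem consWithSum_sum_tail (x : Fin (K + 1) → G) :
    consWithSum (∑ i, x i) (Fin.tail x) = x := by
  rw [consWithSum, Fin.sum_univ_succ]
  simp only [Fin.tail, add_sub_cancel_right]
  exact Fin.cons_self_tail x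

end Index

/-- The scheme with databases `Fin N` whose answers are those of the group code over `Fin N`, the
answers of database `n` being indexed by the tails of the queries with sum `n`. -/
def scheme (K N : ℕ) [NeZero N] :
    IRScheme (K + 1) N (fun _ => N ^ K) ((N : ℝ) ^ (K + 1) * (N - 1)) ((N : ℝ) ^ (K + 1) - 1) where
  P := uniform (Fin (K + 1) → Message (Fin (K + 1)) (Fin N))
  V := Message (Fin (K + 1)) (Fin N)
  V' := (Fin (K + 1) → Fin N) → ZMod 2
  W k ω := ω k
  A n m := answer (consWithSum n (finFunctionFinEquiv.symm m))
  indep := iIndep_uniform_eval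
  HW k := by simpa using H_message (κ := Fin (K + 1)) (G := Fin N) k
  ans_fn n m := ⟨answer (consWithSum n (finFunctionFinEquiv.symm m)), fun _ => rfl⟩
  HA n m := by simpa using H_answer (consWithSum n (finFunctionFinEquiv.symm m))
  Q k := univ.image fun x n => finFunctionFinEquiv (Fin.tail (query k x n))
  Q_nonempty k := univ_nonempty.image _
  decodes := by
    intro k q hq
    obtain ⟨x, -, rfl⟩ := mem_image.1 hq
    rw [condH, sub_eq_zero]
    refine H_congr _ fun ω ω' => Prod.mk_inj.trans (and_iff_right_of_imp fun h => ?_)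
    refine eq_of_answer_query_eq (k := k) (x := x) fun n => ?_
    have hn := congrFun h n
    have hquery := consWithSum_sum_tail (query k x n)
    rw [sum_query] at hquery
    simpa only [tuple, Equiv.symm_apply_apply, hquery] using hn

theorem isRIR_scheme (K N : ℕ) [NeZero N] : (scheme K N).IsRIR := by
  intro n m k
  set x := consWithSum n (finFunctionFinEquiv.symm m) with hx
  refine ⟨_, mem_image_of_mem _ (mem_univ x), ?_⟩
  have hquery : query k x n = x := by
    simpa only [hx, sum_consWithSum] using query_sum k x
  beta_reduce
  rw [hquery]
  simp [hx, consWithSum]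

theorem rate_eq_CK (K : ℕ) {N : ℕ} (hN : 1 < N) :
    (N : ℝ) ^ (K + 1) * (N - 1) / (N * ((N : ℝ) ^ (K + 1) - 1)) = CK N (K + 1) := by
  have hN' : (1 : ℝ) < N := by exact_mod_cast hN
  have hpow : (1 : ℝ) < (N : ℝ) ^ (K + 1) := one_lt_pow₀ hN' K.succ_ne_zero
  have hgeom := geom_sum_mul (1 / (N : ℝ)) (K + 1)
  rw [div_pow, one_pow] at hgeom
  refine eq_inv_of_mul_eq_one_left ?_
  rw [div_mul_eq_mul_div, div_eq_one_iff_eq (mul_pos (by positivity) (sub_pos.2 hpow)).ne']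
  field_simp at hgeom
  linear_combination -hgeom

end GroupScheme

/-- Minimum upload cost of capacity achieving RIR_max, Corollary 4: every
capacity achieving RIR_max scheme has `M_n ≥ N^{K-1}` for every database `n` (upload cost at
least `(K-1) log N` bits per database), and there is a capacity achieving RIR_max scheme
with `M_n = N^{K-1}` for every `n`. -/
theorem rir_min_upload (K N : ℕ) (hK : 1 ≤ K) (hN : 2 ≤ N) :
    (∀ (Mn : Fin N → ℕ) (Lw Lx : ℝ), 0 < Lw → 0 < Lx →
      ∀ C : IRScheme K N Mn Lw Lx, C.IsRIR → Lw / (N * Lx) = CK N K →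
        ∀ n : Fin N, N ^ (K - 1) ≤ Mn n) ∧
    (∃ (Lw Lx : ℝ), 0 < Lw ∧ 0 < Lx ∧
      ∃ C : IRScheme K N (fun _ => N ^ (K - 1)) Lw Lx,
        C.IsRIR ∧ Lw / (N * Lx) = CK N K) := by
  refine ⟨fun Mn Lw Lx hLw _ C hC hR n => IRScheme.pow_le_of_rate_eq_CK hC hK hLw hR n, ?_⟩
  obtain ⟨K, rfl⟩ := Nat.exists_eq_add_of_le' hK
  have : NeZero N := ⟨by lia⟩
  have hN' : (1 : ℝ) < N := by exact_mod_cast hN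
  exact ⟨(N : ℝ) ^ (K + 1) * (N - 1), (N : ℝ) ^ (K + 1) - 1,
    mul_pos (by positivity) (sub_pos.2 hN'), sub_pos.2 (one_lt_pow₀ hN' K.succ_ne_zero),
    GroupScheme.scheme K N, GroupScheme.isRIR_scheme K N, GroupScheme.rate_eq_CK K hN⟩
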